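/- arXiv:2603.04188 — 2 statements merged into one kernel-verified Lean document; each statement's English description precedes it below -/
import Mathlib

section
/- For all real numbers x, y, z in the open interval (-1, 1), one has (x + y)/(1 + x·y) ≤ z if and only if x ≤ (z - y)/(1 - z·y). That is, hyperbolic subtraction [y, z] = (z - y)/(1 - z·y) is an internal hom for the hyperbolic sum, making the certainty factor calculus CF closed. -/
/-- Hyperbolic subtraction is an internal hom for the hyperbolic sum:
the certainty factor calculus CF is closed. -/
theorem cf_closed :
    ∀ x ∈ Set.Ioo (-1 : ℝ) 1, ∀ y ∈ Set.Ioo (-1 : ℝ) 1, ∀ z ∈ Set.Ioo (-1 : ℝ) 1,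
      (x + y) / (1 + x * y) ≤ z ↔ x ≤ (z - y) / (1 - z * y) := by
  rintro x ⟨hx1, hx2⟩ y ⟨hy1, hy2⟩ z ⟨hz1, hz2⟩
  have h1 : 0 < 1 + x * y := by
    nlinarith [mul_pos (sub_pos.2 hx1) (sub_pos.2 hy1), mul_pos (sub_pos.2 hx2) (sub_pos.2 hy2)]
  have h2 : 0 < 1 - z * y := by
    nlinarith [mul_pos (sub_pos.2 hz1) (sub_pos.2 hy2), mul_pos (sub_pos.2 hz2) (sub_pos.2 hy1)]
  rw [div_le_iff₀ h1, le_div_iff₀ h2]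
  constructor <;> intro h <;> linarith
end

section
/- Let V be a partially ordered set with a binary operation ⊗ that is commutative, associative, monotone in each argument, has unit 1, and admits an internal hom [-,-] satisfying x ⊗ y ≤ z if and only if x ≤ [y, z] for all x, y, z. Let X be a set and d : X × X → V a strict V-enrichment, i.e. d(x, x) = 1 for all x and d(y, z) ⊗ d(x, y) = d(x, z) for all x, y, z. Fix E ∈ X and define the V-update d_E(x, y) = [d(x, y) ⊗ d(y, E), d(x, E)]. Then d_E is again a V-enrichment in the lax sense: 1 ≤ d_E(x, x) for all x, and d_E(y, z) ⊗ d_E(x, y) ≤ d_E(x, z) for all x, y, z. -/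
/-- In any closed epistemic calculus V, the V-update of a strict
V-enrichment d of a set X based on evidence E, namely
d_E(x, y) = [d(x, y) ⊗ d(y, E), d(x, E)], is again a V-enrichment in the lax sense. -/
theorem update_is_lax_enrichment
    {V : Type*} [PartialOrder V] (op : V → V → V) (one : V) (hom : V → V → V)
    (hcomm : ∀ x y : V, op x y = op y x)
    (hassoc : ∀ x y z : V, op (op x y) z = op x (op y z))
    (hmono : ∀ x y z w : V, x ≤ y → z ≤ w → op x z ≤ op y w)
    (hunit : ∀ x : V, op x one = x)
    (hadj : ∀ x y z : V, op x y ≤ z ↔ x ≤ hom y z)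
    {X : Type*} (d : X → X → V)
    (hid : ∀ x : X, d x x = one)
    (hcompose : ∀ x y z : X, op (d y z) (d x y) = d x z)
    (E : X)
    (dE : X → X → V)
    (hdE : ∀ x y : X, dE x y = hom (op (d x y) (d y E)) (d x E)) :
    (∀ x : X, one ≤ dE x x) ∧
    (∀ x y z : X, op (dE y z) (dE x y) ≤ dE x z) := by
  have key : ∀ x y : X, dE x y = one := by
    intro x y
    have h1 : op (d x y) (d y E) = d x E := by rw [hcomm, hcompose]
    have hinv : op (d x E) (d E x) = one := by rw [hcomm, hcompose, hid]
    rw [hdE, h1]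
    apply le_antisymm
    · have h2 : op (hom (d x E) (d x E)) (d x E) ≤ d x E := (hadj _ _ _).2 le_rfl
      have h3 := hmono _ _ _ _ h2 (le_refl (d E x))
      rwa [hassoc, hinv, hunit] at h3
    · rw [← hadj, hcomm, hunit]
  refine ⟨fun x => (key x x).ge, fun x y z => ?_⟩
  rw [key, key, key, hunit]
end
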